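/- Let 1 ≤ n < α and θ = κ = (n+α)/(n−α). Suppose (u, v) is a pair of positive, everywhere finite, smooth functions on ℝⁿ satisfying u(y) = ∫_{ℝⁿ}|x−y|^{α−n} v(x)^κ dx and v(x) = ∫_{ℝⁿ}|x−y|^{α−n} u(y)^θ dy for all x, y ∈ ℝⁿ. For x ∈ ℝⁿ define λ̄(x) = sup{μ > 0 : for every λ ∈ (0, μ), u_{x,λ}(ξ) ≥ u(ξ) and v_{x,λ}(η) ≥ v(η) for all ξ, η ∈ Σ_{x,λ}}. If λ̄(x₀) < ∞ for some x₀ ∈ ℝⁿ, then u_{x₀, λ̄(x₀)}(ξ) = u(ξ) and v_{x₀, λ̄(x₀)}(η) = v(η) for all ξ, η ∈ ℝⁿ \ {x₀}. -/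

import Mathlib

open MeasureTheory ENNReal

/-- The Kelvin-type transform
`ω_{x,λ}(ξ) = (λ/|ξ-x|)^(n-α) ω(x + λ²(ξ-x)/|ξ-x|²)`. -/
noncomputable def kelvin (n : ℕ) (α : ℝ) (ω : EuclideanSpace ℝ (Fin n) → ℝ)
    (x : EuclideanSpace ℝ (Fin n)) (lam : ℝ) (ξ : EuclideanSpace ℝ (Fin n)) : ℝ :=
  (lam / dist ξ x) ^ ((n : ℝ) - α) * ω (x + (lam ^ 2 / dist ξ x ^ 2) • (ξ - x))

/-!
Inversion in the sphere of center `c` and radius `R` folds each integral over the whole space onto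
the exterior of the sphere. Since the exponents are conformally invariant, this gives
`u_R(x) - u(x) = ∫ (reflected kernel - kernel) * (v ^ κ - v_R ^ κ)` over the exterior, where both
factors are nonnegative as long as `v ≤ v_R`, because `κ < 0`. One point of strict inequality for
`v` therefore produces a gap between `u` and `u_R` that is of first order at the sphere and of the
order of the kernel at infinity, and this gap in turn produces one for `v`. Near the sphere such a
gap fixes the sign of a radial derivative, near infinity it survives a small change of the radius
by compactness, so the spheres could move beyond the stopping radius. Hence both inequalities are
equalities outside the critical sphere, and inversion transfers them to its interior.
-/

open EuclideanGeometry AffineMap Filter Metric Module Set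
open scoped Topology

section Inversion

variable {E : Type*} [NormedAddCommGroup E] [InnerProductSpace ℝ E]
  {c x z : E} {R : ℝ}

lemma lt_dist_inversion_center_iff (hR : 0 < R) (hx : x ≠ c) :
    R < dist (inversion c R x) c ↔ dist x c < R := by
  rw [dist_inversion_center, lt_div_iff₀ (dist_pos.2 hx), sq, mul_lt_mul_iff_right₀ hR]

lemma image_inversion_compl_closedBall (c : E) (hR : 0 < R) :
    inversion c R '' (closedBall c R)ᶜ = ball c R \ {c} := by
  ext x
  rw [(inversion_involutive c hR.ne').image_eq_preimage_symm]
  rcases eq_or_ne x c with rfl | hx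
  · simp [hR.le]
  · simp [hx, lt_dist_inversion_center_iff hR hx]

/-- The distance between `x` and the mirror image of `z` in the sphere of center `c` and radius `R`,
scaled so as to agree with `dist z x` when `x` or `z` lies on the sphere. -/
noncomputable def reflectedDist (c : E) (R : ℝ) (z x : E) : ℝ :=
  dist z c / R * dist (inversion c R z) x

lemma reflectedDist_nonneg (hR : 0 ≤ R) : 0 ≤ reflectedDist c R z x := by
  unfold reflectedDist; positivity

lemma dist_div_mul_dist_inversion (hz : z ≠ c) (hx : x ≠ c) :
    dist x c / R * dist z (inversion c R x) = reflectedDist c R z x := by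
  rw [reflectedDist, div_mul_eq_mul_div, div_mul_eq_mul_div, mul_comm,
    ← dist_inversion_mul_dist_center_eq hz hx, mul_comm]

lemma dist_div_mul_reflectedDist_inversion (hR : R ≠ 0) (hz : z ≠ c) (hx : x ≠ c) :
    dist x c / R * reflectedDist c R z (inversion c R x) = dist z x := by
  rw [← dist_div_mul_dist_inversion hz (by simp [hx, hR]), inversion_inversion c hR,
    dist_inversion_center]
  have := dist_ne_zero.2 hx
  field_simp

lemma reflectedDist_sq_sub_dist_sq (hR : R ≠ 0) (hz : z ≠ c) :
    reflectedDist c R z x ^ 2 - dist z x ^ 2 =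
      (dist x c ^ 2 - R ^ 2) * (dist z c ^ 2 - R ^ 2) / R ^ 2 := by
  have hzc : ‖z - c‖ ≠ 0 := norm_ne_zero_iff.2 (sub_ne_zero.2 hz)
  have hz_inv : inversion c R z - x = (R / ‖z - c‖) ^ 2 • (z - c) - (x - c) := by
    simp only [inversion, vsub_eq_sub, vadd_eq_add, dist_eq_norm]; abel
  have hzx : z - x = (z - c) - (x - c) := by abel
  simp only [reflectedDist, mul_pow, dist_eq_norm, hz_inv, hzx]
  generalize z - c = z' at *
  generalize x - c = x' at *
  rw [norm_sub_sq_real, norm_sub_sq_real, real_inner_smul_left, norm_smul,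
    Real.norm_of_nonneg (sq_nonneg _)]
  field_simp
  ring

lemma dist_le_reflectedDist (hR : 0 < R) (hz : R < dist z c) (hx : R < dist x c) :
    dist z x ≤ reflectedDist c R z x := by
  refine le_of_sq_le_sq (sub_nonneg.1 ?_) (reflectedDist_nonneg hR.le)
  rw [reflectedDist_sq_sub_dist_sq hR.ne' (dist_pos.1 (hR.trans hz))]
  have hx_sq : R ^ 2 ≤ dist x c ^ 2 := by gcongr
  have hz_sq : R ^ 2 ≤ dist z c ^ 2 := by gcongr
  have := sub_nonneg.2 hx_sq
  have := sub_nonneg.2 hz_sq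
  positivity

lemma abs_reflectedDist_sub_le (hR : 0 < R) (hz : z ≠ c) :
    |reflectedDist c R z x - dist z c / R * dist x c| ≤ R := by
  have hzc : 0 < dist z c := dist_pos.2 hz
  calc |reflectedDist c R z x - dist z c / R * dist x c|
      = dist z c / R * |dist (inversion c R z) x - dist c x| := by
        rw [reflectedDist, ← mul_sub, abs_mul, abs_of_pos (div_pos hzc hR), dist_comm x c]
    _ ≤ dist z c / R * dist (inversion c R z) c := by gcongr; exact abs_dist_sub_le _ _ _
    _ = R := by rw [dist_inversion_center]; field_simp

end Inversion

section Barrier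

variable {X : Type*} [PseudoMetricSpace X] {c x : X} {R : ℝ}

/-- The lower barrier for `kelvinTransform p f c R - f` outside the sphere: it vanishes to first
order on the sphere and grows like `dist x c ^ p` at infinity. -/
noncomputable def sphereBarrier (p : ℝ) (c : X) (R : ℝ) (x : X) : ℝ :=
  dist x c ^ p * (1 - R ^ 2 / dist x c ^ 2)

lemma sphereBarrier_pos (p : ℝ) (hR : 0 < R) (hx : R < dist x c) : 0 < sphereBarrier p c R x := by
  have hxc : 0 < dist x c := hR.trans hx
  have : 0 < 1 - R ^ 2 / dist x c ^ 2 := by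
    rw [sub_pos, div_lt_one (by positivity)]; gcongr
  unfold sphereBarrier
  positivity

end Barrier

section KelvinTransform

variable {E : Type*} [NormedAddCommGroup E] [InnerProductSpace ℝ E]
  {c x : E} {p q r R : ℝ} {f : E → ℝ}

/-- The Kelvin transform of `f` in the sphere of center `c` and radius `R`, with weight exponent
`-p`; the transform `kelvin n α` of the statement is the case `p = α - n`. -/
noncomputable def kelvinTransform (p : ℝ) (f : E → ℝ) (c : E) (R : ℝ) (x : E) : ℝ :=
  (R / dist x c) ^ (-p) * f (inversion c R x)

lemma kelvin_eq_kelvinTransform (n : ℕ) (α : ℝ) : kelvin n α = kelvinTransform (α - n) := by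
  ext ω x l ξ
  rw [kelvin, kelvinTransform, inversion, vsub_eq_sub, vadd_eq_add, neg_sub, div_pow, add_comm x]

lemma kelvinTransform_eq_rpow_mul (hR : 0 ≤ R) :
    kelvinTransform p f c R x = (dist x c / R) ^ p * f (inversion c R x) := by
  rw [kelvinTransform, Real.rpow_neg (by positivity), ← Real.inv_rpow (by positivity), inv_div]

lemma kelvinTransform_nonneg (hR : 0 ≤ R) (hf : ∀ y, 0 ≤ f y) : 0 ≤ kelvinTransform p f c R x :=
  mul_nonneg (by positivity) (hf _)

lemma kelvinTransform_pos (hR : 0 < R) (hx : x ≠ c) (hf : ∀ y, 0 < f y) :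
    0 < kelvinTransform p f c R x :=
  mul_pos (Real.rpow_pos_of_pos (div_pos hR (dist_pos.2 hx)) _) (hf _)

lemma kelvinTransform_kelvinTransform (hR : 0 < R) (hx : x ≠ c) :
    kelvinTransform p (kelvinTransform p f c R) c R x = f x := by
  have hxc : 0 < dist x c := dist_pos.2 hx
  have hmul : R / dist x c * (R / (R ^ 2 / dist x c)) = 1 := by field_simp
  rw [kelvinTransform, kelvinTransform, dist_inversion_center, inversion_inversion c hR.ne',
    ← mul_assoc, ← Real.mul_rpow (by positivity) (by positivity), hmul, Real.one_rpow, one_mul]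

lemma kelvinTransform_eq_self_of_exterior (hR : 0 < R)
    (h : ∀ y, R < dist y c → kelvinTransform p f c R y = f y) (hx : x ≠ c) :
    kelvinTransform p f c R x = f x := by
  rcases lt_trichotomy R (dist x c) with hlt | rfl | hgt
  · exact h x hlt
  · rw [kelvinTransform, div_self hR.ne', Real.one_rpow, one_mul, inversion_dist_center]
  · rw [kelvinTransform, ← h _ ((lt_dist_inversion_center_iff hR hx).2 hgt)]
    exact kelvinTransform_kelvinTransform hR hx

lemma continuousAt_kelvinTransform (hf : Continuous f) (hR : R ≠ 0) (hx : x ≠ c) :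
    ContinuousAt (fun w : ℝ × E => kelvinTransform p f c w.1 w.2) (R, x) := by
  refine ContinuousAt.mul ?_ (hf.continuousAt.comp
    (continuousAt_const.inversion continuousAt_fst continuousAt_snd hx))
  exact (continuousAt_fst.div (continuousAt_snd.dist continuousAt_const)
    (dist_ne_zero.2 hx)).rpow_const (Or.inl (div_ne_zero hR (dist_ne_zero.2 hx)))

lemma kelvinTransform_rpow (hR : 0 ≤ R) (hf : ∀ y, 0 ≤ f y) :
    kelvinTransform q f c R x ^ r = (R / dist x c) ^ (-(r * q)) * f (inversion c R x) ^ r := by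
  rw [kelvinTransform, Real.mul_rpow (by positivity) (hf _), ← Real.rpow_mul (by positivity),
    neg_mul, mul_comm q]

/-- `f` lies below its Kelvin transform outside the sphere of center `c` and radius `R`. -/
def KelvinDominated (p : ℝ) (f : E → ℝ) (c : E) (R : ℝ) : Prop :=
  ∀ x, R < dist x c → f x ≤ kelvinTransform p f c R x

lemma KelvinDominated.of_eventually (hf : Continuous f) (hR : 0 < R)
    (h : ∀ᶠ l in 𝓝[<] R, KelvinDominated p f c l) : KelvinDominated p f c R := by
  intro x hx
  have hcont : ContinuousAt (fun l => kelvinTransform p f c l x) R :=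
    (continuousAt_kelvinTransform hf hR.ne' (dist_pos.1 (hR.trans hx))).comp
      (f := fun l => (l, x)) (by fun_prop)
  have hlim : Tendsto (fun l => kelvinTransform p f c l x) (𝓝[<] R)
      (𝓝 (kelvinTransform p f c R x)) := hcont.tendsto.mono_left nhdsWithin_le_nhds
  refine ge_of_tendsto hlim ?_
  filter_upwards [h, self_mem_nhdsWithin] with l hl hlR
  exact hl x (lt_trans hlR hx)

/-- Outside the sphere of center `c` and radius `R`, `f` lies below its Kelvin transform by at
least a fixed multiple of `sphereBarrier`. -/
def StronglyKelvinDominated (p : ℝ) (f : E → ℝ) (c : E) (R : ℝ) : Prop :=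
  ∃ k > 0, ∀ x, R < dist x c → f x + k * sphereBarrier p c R x ≤ kelvinTransform p f c R x

lemma StronglyKelvinDominated.lt (h : StronglyKelvinDominated p f c R) (hR : 0 < R)
    (hx : R < dist x c) : f x < kelvinTransform p f c R x := by
  obtain ⟨k, hk, hle⟩ := h
  exact (lt_add_of_pos_right _ (mul_pos hk (sphereBarrier_pos p hR hx))).trans_le (hle x hx)

end KelvinTransform

section ChangeOfVariables

variable {E : Type*} [NormedAddCommGroup E] [InnerProductSpace ℝ E] [FiniteDimensional ℝ E]
  {c x : E} {R : ℝ}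

lemma abs_det_fderiv_inversion (hx : x ≠ c) :
    |(fderiv ℝ (inversion c R) x).det| = (R / dist x c) ^ (2 * finrank ℝ E) := by
  rw [(hasFDerivAt_inversion hx).fderiv, ContinuousLinearMap.det,
    ContinuousLinearMap.toLinearMap_smul, LinearMap.det_smul, abs_mul, pow_mul,
    abs_of_nonneg (by positivity)]
  have hdet : |LinearMap.det ((ℝ ∙ (x - c))ᗮ.reflection : E →ₗ[ℝ] E)| = 1 :=
    (congrArg abs (Submodule.det_reflection (ℝ ∙ (x - c))ᗮ)).trans (by simp)
  exact (congrArg _ hdet).trans (mul_one _)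

variable [Nontrivial E] [MeasurableSpace E] [BorelSpace E] {μ : Measure E} [μ.IsAddHaarMeasure]

lemma closedBall_ae_eq_image_inversion (c : E) (hR : 0 < R) :
    (closedBall c R : Set E) =ᵐ[μ] inversion c R '' (closedBall c R)ᶜ := by
  have hball : (ball c R : Set E) =ᵐ[μ] closedBall c R :=
    ae_eq_of_subset_of_measure_ge ball_subset_closedBall
      (Measure.addHaar_closedBall_eq_addHaar_ball μ c R).le measurableSet_ball.nullMeasurableSet
      measure_closedBall_lt_top.ne
  rw [image_inversion_compl_closedBall c hR]
  exact hball.symm.trans (sdiff_null_ae_eq_self (measure_singleton c)).symm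

lemma lintegral_eq_setLIntegral_compl_closedBall_add_inversion (c : E) (hR : 0 < R)
    (g : E → ℝ≥0∞) :
    ∫⁻ x, g x ∂μ = ∫⁻ x in (closedBall c R)ᶜ, g x ∂μ +
      ∫⁻ x in (closedBall c R)ᶜ,
        ENNReal.ofReal ((R / dist x c) ^ (2 * finrank ℝ E)) * g (inversion c R x) ∂μ := by
  have hne : ∀ x ∈ (closedBall c R)ᶜ, x ≠ c := by
    rintro x hx rfl
    exact hx (mem_closedBall_self hR.le)
  have hderiv : ∀ x ∈ (closedBall c R)ᶜ,
      HasFDerivWithinAt (inversion c R) (fderiv ℝ (inversion c R) x) (closedBall c R)ᶜ x :=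
    fun x hx => (hasFDerivAt_inversion (hne x hx)).differentiableAt.hasFDerivAt.hasFDerivWithinAt
  rw [← lintegral_add_compl g measurableSet_closedBall, add_comm,
    setLIntegral_congr (closedBall_ae_eq_image_inversion c hR),
    lintegral_image_eq_lintegral_abs_det_fderiv_mul μ measurableSet_closedBall.compl hderiv
      (inversion_injective c hR.ne').injOn]
  congr 1
  refine setLIntegral_congr_fun measurableSet_closedBall.compl fun x hx => ?_
  simp only [abs_det_fderiv_inversion (hne x hx)]

end ChangeOfVariables

section KernelGap

lemma min_one_mul_one_sub_le_one_sub_rpow {s x : ℝ} (hs : 0 ≤ s) (hx0 : 0 ≤ x) (hx1 : x ≤ 1) :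
    min 1 s * (1 - x) ≤ 1 - x ^ s := by
  rcases le_total 1 s with h | h
  · have : x ^ s ≤ x := by
      simpa using Real.rpow_le_rpow_of_exponent_ge' hx0 hx1 zero_le_one h
    rw [min_eq_left h]
    linarith
  · have := rpow_one_add_le_one_add_mul_self (s := x - 1) (by linarith) hs h
    rw [add_sub_cancel] at this
    rw [min_eq_right h]
    linarith

lemma mul_sq_sub_sq_le_rpow_sub_rpow {p A B : ℝ} (hp : 0 ≤ p) (hA : 0 < A) (hB : 0 ≤ B)
    (hBA : B ≤ A) :
    min 1 (p / 2) * (A ^ p * ((A ^ 2 - B ^ 2) / A ^ 2)) ≤ A ^ p - B ^ p := by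
  have hratio : (B / A) ^ 2 ≤ 1 := pow_le_one₀ (by positivity) ((div_le_one hA).2 hBA)
  have hgap := min_one_mul_one_sub_le_one_sub_rpow (div_nonneg hp zero_le_two) (sq_nonneg _) hratio
  have hpow : ((B / A) ^ 2) ^ (p / 2) = B ^ p / A ^ p := by
    rw [← Real.rpow_natCast_mul (by positivity), Nat.cast_ofNat, mul_div_cancel₀ _ two_ne_zero,
      Real.div_rpow hB hA.le]
  have : 0 < A ^ p := Real.rpow_pos_of_pos hA p
  calc min 1 (p / 2) * (A ^ p * ((A ^ 2 - B ^ 2) / A ^ 2))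
      = A ^ p * (min 1 (p / 2) * (1 - (B / A) ^ 2)) := by field_simp
    _ ≤ A ^ p * (1 - B ^ p / A ^ p) := by rw [← hpow]; gcongr
    _ = A ^ p - B ^ p := by field_simp

variable {E : Type*} [NormedAddCommGroup E] [InnerProductSpace ℝ E] {c : E} {p R a : ℝ}

lemma exists_mul_sphereBarrier_le_rpow_sub_rpow (c : E) (hR : 0 < R) (hp : 0 < p) (ha : R < a)
    (b : ℝ) :
    ∃ k > 0, ∀ z, a ≤ dist z c → dist z c ≤ b → ∀ x, R < dist x c →
      k * sphereBarrier p c R x ≤ reflectedDist c R z x ^ p - dist z x ^ p := by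
  rcases lt_or_ge b 0 with hb | hb
  · exact ⟨1, one_pos, fun z _ hzb => absurd (dist_nonneg.trans hzb) hb.not_ge⟩
  have haR : 0 < a / R - 1 := by rwa [sub_pos, one_lt_div hR]
  have ha0 : 0 ≤ a := (hR.trans ha).le
  have : 0 < a ^ 2 - R ^ 2 := by rw [sub_pos]; gcongr
  refine ⟨min 1 (p / 2) * ((a / R - 1) ^ p * ((a ^ 2 - R ^ 2) / R ^ 2 / (b / R + 1) ^ 2)),
    by positivity, fun z hza hzb x hx => ?_⟩
  have hz : R < dist z c := ha.trans_le hza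
  have hzc : z ≠ c := dist_pos.1 (hR.trans hz)
  have hxc : 0 < dist x c := hR.trans hx
  have : 0 < dist x c ^ 2 - R ^ 2 := by rw [sub_pos]; gcongr
  have : 0 < dist z c ^ 2 - R ^ 2 := by rw [sub_pos]; gcongr
  obtain ⟨hlow, hupp⟩ := abs_le.1 (abs_reflectedDist_sub_le (x := x) hR hzc)
  have hlower : (a / R - 1) * dist x c ≤ reflectedDist c R z x := by
    have : a / R * dist x c ≤ dist z c / R * dist x c := by gcongr
    linarith
  have hupper : reflectedDist c R z x ≤ (b / R + 1) * dist x c := by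
    have : dist z c / R * dist x c ≤ b / R * dist x c := by gcongr
    linarith
  have hpos : 0 < reflectedDist c R z x := (mul_pos haR hxc).trans_le hlower
  refine le_trans ?_ (mul_sq_sub_sq_le_rpow_sub_rpow hp.le hpos dist_nonneg
    (dist_le_reflectedDist hR hz hx))
  rw [mul_assoc, reflectedDist_sq_sub_dist_sq hR.ne' hzc]
  refine mul_le_mul_of_nonneg_left ?_ (by positivity)
  calc (a / R - 1) ^ p * ((a ^ 2 - R ^ 2) / R ^ 2 / (b / R + 1) ^ 2) * sphereBarrier p c R x
      = ((a / R - 1) * dist x c) ^ p *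
          ((dist x c ^ 2 - R ^ 2) * (a ^ 2 - R ^ 2) / R ^ 2 / ((b / R + 1) * dist x c) ^ 2) := by
        rw [sphereBarrier, Real.mul_rpow haR.le hxc.le]
        field_simp
    _ ≤ reflectedDist c R z x ^ p *
          ((dist x c ^ 2 - R ^ 2) * (dist z c ^ 2 - R ^ 2) / R ^ 2 /
            reflectedDist c R z x ^ 2) := by
        have : 0 ≤ (dist x c ^ 2 - R ^ 2) * (dist z c ^ 2 - R ^ 2) / R ^ 2 := by positivity
        gcongr

variable [FiniteDimensional ℝ E] [MeasurableSpace E] [BorelSpace E]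
  (μ : Measure E) [μ.IsAddHaarMeasure]

lemma exists_mul_sphereBarrier_le_setLIntegral {g : E → ℝ} {z₀ : E} (hR : 0 < R) (hp : 0 < p)
    (hz₀ : R < dist z₀ c) (hg : ContinuousAt g z₀) (hg₀ : 0 < g z₀) :
    ∃ k > 0, ∀ x, R < dist x c → ENNReal.ofReal (k * sphereBarrier p c R x) ≤
      ∫⁻ z in (closedBall c R)ᶜ,
        ENNReal.ofReal ((reflectedDist c R z x ^ p - dist z x ^ p) * g z) ∂μ := by
  obtain ⟨a, hRa, haz₀⟩ := exists_between hz₀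
  obtain ⟨m, hm, hmg⟩ := exists_between hg₀
  obtain ⟨k, hk, hgap⟩ :=
    exists_mul_sphereBarrier_le_rpow_sub_rpow c hR hp hRa (dist z₀ c + 1)
  have hdist : ContinuousAt (fun z => dist z c) z₀ := by fun_prop
  obtain ⟨ρ, hρ, hball⟩ := Metric.eventually_nhds_iff_ball.1
    ((hg.eventually_const_lt hmg).and ((hdist.eventually_const_lt haz₀).and
      (hdist.eventually_lt_const (lt_add_one _))))
  have hvol : 0 < μ.real (ball z₀ ρ) := 
    ENNReal.toReal_pos (measure_ball_pos μ z₀ hρ).ne' measure_ball_lt_top.ne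
  refine ⟨k * m * μ.real (ball z₀ ρ), by positivity, fun x hx => ?_⟩
  have hbar : 0 < k * sphereBarrier p c R x := mul_pos hk (sphereBarrier_pos p hR hx)
  have hsub : ball z₀ ρ ⊆ (closedBall c R)ᶜ := fun z hz =>
    not_le.2 (hRa.trans (hball z hz).2.1)
  calc ENNReal.ofReal (k * m * μ.real (ball z₀ ρ) * sphereBarrier p c R x)
      = ∫⁻ _ in ball z₀ ρ, ENNReal.ofReal (k * sphereBarrier p c R x * m) ∂μ := by
        rw [setLIntegral_const, ← ofReal_measureReal measure_ball_lt_top.ne,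
          ← ENNReal.ofReal_mul (by positivity)]
        congr 1; ring
    _ ≤ ∫⁻ z in ball z₀ ρ,
          ENNReal.ofReal ((reflectedDist c R z x ^ p - dist z x ^ p) * g z) ∂μ := by
        refine setLIntegral_mono' measurableSet_ball fun z hz => ENNReal.ofReal_le_ofReal ?_
        obtain ⟨hgz, haz, hzb⟩ := hball z hz
        have := hgap z haz.le hzb.le x hx
        exact mul_le_mul this hgz.le hm.le (hbar.le.trans this)
    _ ≤ _ := lintegral_mono_set hsub

end KernelGap

section PowerPotential

/-- `U` is the potential of the density `V ^ r` with respect to the kernel `|x - y| ^ p`. The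
integral is a lower Lebesgue integral, so the potential is finite everywhere. -/
def IsPowerPotential {X : Type*} [PseudoMetricSpace X] [MeasurableSpace X] (μ : Measure X)
    (p r : ℝ) (U V : X → ℝ) : Prop :=
  ∀ y, ENNReal.ofReal (U y) = ∫⁻ x, ENNReal.ofReal (dist x y ^ p * V x ^ r) ∂μ

variable {E : Type*} [NormedAddCommGroup E] [InnerProductSpace ℝ E] {c x z : E}
  {p q r R : ℝ} {U V : E → ℝ}

lemma reflectedDist_rpow_mul_kelvinTransform_rpow {d : ℕ} (hR : 0 < R) (hr : r * q = -(2 * d + p))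
    (hV : ∀ y, 0 ≤ V y) (hz : z ≠ c) :
    reflectedDist c R z x ^ p * kelvinTransform q V c R z ^ r =
      (R / dist z c) ^ (2 * d) * (dist (inversion c R z) x ^ p * V (inversion c R z) ^ r) := by
  have hzc : 0 < dist z c := dist_pos.2 hz
  have hcancel : (dist z c / R) ^ p * (R / dist z c) ^ p = 1 := by
    have hone : dist z c / R * (R / dist z c) = 1 := by field_simp
    rw [← Real.mul_rpow (by positivity) (by positivity), hone, Real.one_rpow]
  have hpow : (R / dist z c) ^ (2 * d : ℝ) = (R / dist z c) ^ (2 * d) := by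
    rw [← Real.rpow_natCast]; push_cast; rfl
  rw [kelvinTransform_rpow hR.le hV, hr, neg_neg, Real.rpow_add (by positivity), hpow,
    reflectedDist, Real.mul_rpow (by positivity) dist_nonneg]
  linear_combination ((R / dist z c) ^ (2 * d) * dist (inversion c R z) x ^ p *
    V (inversion c R z) ^ r) * hcancel

variable [FiniteDimensional ℝ E] [Nontrivial E] [MeasurableSpace E] [BorelSpace E]
  {μ : Measure E} [μ.IsAddHaarMeasure]

namespace IsPowerPotential

lemma ofReal_eq_setLIntegral (hU : IsPowerPotential μ p r U V) (hR : 0 < R)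
    (hr : r * q = -(2 * finrank ℝ E + p)) (hVm : Measurable V) (hV : ∀ y, 0 ≤ V y) (c x : E) :
    ENNReal.ofReal (U x) = ∫⁻ z in (closedBall c R)ᶜ, ENNReal.ofReal
      (dist z x ^ p * V z ^ r + reflectedDist c R z x ^ p * kelvinTransform q V c R z ^ r) ∂μ := by
  have hmeas : Measurable fun z => dist z x ^ p * V z ^ r := by fun_prop
  rw [hU, lintegral_eq_setLIntegral_compl_closedBall_add_inversion c hR,
    ← lintegral_add_left hmeas.ennreal_ofReal]
  refine setLIntegral_congr_fun measurableSet_closedBall.compl fun z hz => ?_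
  have hzc : z ≠ c := dist_pos.1 (hR.trans (not_le.1 hz))
  have hVz := hV z
  have hVz' := hV (inversion c R z)
  rw [reflectedDist_rpow_mul_kelvinTransform_rpow hR hr hV hzc,
    ← ENNReal.ofReal_mul (by positivity), ← ENNReal.ofReal_add (by positivity) (by positivity)]

lemma ofReal_kelvinTransform_eq_setLIntegral (hU : IsPowerPotential μ p r U V) (hR : 0 < R)
    (hr : r * q = -(2 * finrank ℝ E + p)) (hVm : Measurable V) (hV : ∀ y, 0 ≤ V y)
    (hx : x ≠ c) :
    ENNReal.ofReal (kelvinTransform p U c R x) = ∫⁻ z in (closedBall c R)ᶜ, ENNReal.ofReal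
      (reflectedDist c R z x ^ p * V z ^ r + dist z x ^ p * kelvinTransform q V c R z ^ r) ∂μ := by
  rw [kelvinTransform_eq_rpow_mul hR.le, ENNReal.ofReal_mul (by positivity),
    hU.ofReal_eq_setLIntegral hR hr hVm hV c, ← lintegral_const_mul' _ _ ENNReal.ofReal_ne_top]
  refine setLIntegral_congr_fun measurableSet_closedBall.compl fun z hz => ?_
  have hzc : z ≠ c := dist_pos.1 (hR.trans (not_le.1 hz))
  rw [← ENNReal.ofReal_mul (by positivity), mul_add, ← mul_assoc, ← mul_assoc,
    ← Real.mul_rpow (by positivity) dist_nonneg,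
    ← Real.mul_rpow (by positivity) (reflectedDist_nonneg hR.le),
    dist_div_mul_dist_inversion hzc hx, dist_div_mul_reflectedDist_inversion hR.ne' hzc hx]

lemma ofReal_add_setLIntegral_le_ofReal_kelvinTransform (hU : IsPowerPotential μ p r U V)
    (hR : 0 < R) (hp : 0 ≤ p) (hr : r * q = -(2 * finrank ℝ E + p)) (hr0 : r ≤ 0)
    (hVm : Measurable V) (hV : ∀ y, 0 < V y) (hdom : KelvinDominated q V c R)
    (hx : R < dist x c) :
    ENNReal.ofReal (U x) + ∫⁻ z in (closedBall c R)ᶜ, ENNReal.ofReal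
        ((reflectedDist c R z x ^ p - dist z x ^ p) *
          (V z ^ r - kelvinTransform q V c R z ^ r)) ∂μ ≤
      ENNReal.ofReal (kelvinTransform p U c R x) := by
  have hV0 : ∀ y, 0 ≤ V y := fun y => (hV y).le
  rw [hU.ofReal_eq_setLIntegral hR hr hVm hV0 c,
    hU.ofReal_kelvinTransform_eq_setLIntegral hR hr hVm hV0 (dist_pos.1 (hR.trans hx))]
  refine (le_lintegral_add _ _).trans
    (setLIntegral_mono' measurableSet_closedBall.compl fun z hz => ?_)
  have hz : R < dist z c := not_le.1 hz
  have hkernel : 0 ≤ reflectedDist c R z x ^ p - dist z x ^ p :=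
    sub_nonneg.2 (Real.rpow_le_rpow dist_nonneg (dist_le_reflectedDist hR hz hx) hp)
  have hdensity : 0 ≤ V z ^ r - kelvinTransform q V c R z ^ r :=
    sub_nonneg.2 (Real.rpow_le_rpow_of_nonpos (hV z) (hdom z hz) hr0)
  have hVz := hV0 z
  have hKz := kelvinTransform_nonneg (p := q) (c := c) (x := z) hR.le hV0
  have hRz := reflectedDist_nonneg (c := c) (z := z) (x := x) hR.le
  rw [← ENNReal.ofReal_add (by positivity) (by positivity)]
  refine ENNReal.ofReal_le_ofReal (le_of_eq ?_)
  ring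

lemma stronglyKelvinDominated (hU : IsPowerPotential μ p r U V) (hR : 0 < R) (hp : 0 < p)
    (hq : 0 < q) (hr : r * q = -(2 * finrank ℝ E + p)) (hU0 : ∀ y, 0 < U y) (hVc : Continuous V)
    (hV : ∀ y, 0 < V y) (hdom : KelvinDominated q V c R) (hz : R < dist z c)
    (hlt : V z < kelvinTransform q V c R z) : StronglyKelvinDominated p U c R := by
  have hr0 : r < 0 := neg_of_mul_neg_left (by rw [hr]; exact neg_neg_of_pos (by positivity)) hq.le
  have hzc : z ≠ c := dist_pos.1 (hR.trans hz)
  have hcont : ContinuousAt (fun y => V y ^ r - kelvinTransform q V c R y ^ r) z :=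
    (hVc.continuousAt.rpow_const (Or.inl (hV z).ne')).sub
      (((continuousAt_kelvinTransform hVc hR.ne' hzc).comp (f := fun y => (R, y))
        (by fun_prop)).rpow_const (Or.inl (kelvinTransform_pos hR hzc hV).ne'))
  obtain ⟨k, hk, hbarrier⟩ := exists_mul_sphereBarrier_le_setLIntegral μ hR hp hz hcont
    (sub_pos.2 (Real.rpow_lt_rpow_of_neg (hV z) hlt hr0))
  refine ⟨k, hk, fun x hx => ?_⟩
  have hbar := sphereBarrier_pos p hR hx
  have hUx := hU0 x
  rw [← ENNReal.ofReal_le_ofReal_iff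
      (kelvinTransform_pos hR (dist_pos.1 (hR.trans hx)) hU0).le,
    ENNReal.ofReal_add (by positivity) (by positivity)]
  exact (add_le_add_right (hbarrier x hx) _).trans
    (hU.ofReal_add_setLIntegral_le_ofReal_kelvinTransform hR hp.le hr hr0.le hVc.measurable hV
      hdom hx)

end IsPowerPotential

end PowerPotential

section RadialDefect

lemma nonneg_of_hasDerivAt_of_forall_gt_le {g : ℝ → ℝ} {g' a : ℝ} (hg : HasDerivAt g g' a)
    (h : ∀ t, a < t → g a ≤ g t) : 0 ≤ g' := by
  refine ge_of_tendsto hg.tendsto_slope_zero_right ?_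
  filter_upwards [self_mem_nhdsWithin] with t (ht : 0 < t)
  exact smul_nonneg (inv_nonneg.2 ht.le) (sub_nonneg.2 (h _ (lt_add_of_pos_right a ht)))

lemma le_neg_of_hasDerivAt_of_forall_le_sub {g : ℝ → ℝ} {g' C : ℝ} (hg : HasDerivAt g g' 1)
    (h : ∀ t, 1 < t → C * (1 - (t⁻¹) ^ 2) ≤ g t⁻¹ - g t) : g' ≤ -C := by
  have hinv : HasDerivAt (fun t : ℝ => t⁻¹) (-1) 1 := by
    simpa using hasDerivAt_inv (one_ne_zero (α := ℝ))
  have hg_inv : HasDerivAt (fun t => g t⁻¹) (g' * -1) 1 :=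
    HasDerivAt.comp 1 (by simpa using hg) hinv
  have hgap : HasDerivAt (fun t => g t⁻¹ - g t - C * (1 - (t⁻¹) ^ 2)) (-2 * (g' + C)) 1 :=
    ((hg_inv.fun_sub hg).fun_sub (((hinv.fun_pow 2).const_sub 1).const_mul C)).congr_deriv
      (by push_cast; ring)
  have := nonneg_of_hasDerivAt_of_forall_gt_le hgap fun t ht => by simpa using h t ht
  linarith

variable {E : Type*} [NormedAddCommGroup E]

section NormedSpace

variable [NormedSpace ℝ E] {c x : E} {p s t : ℝ} {f : E → ℝ}

/-- `f` along the ray `t ↦ c + t (x - c)`, weighted so that its value at `t = 1` is `f x` and its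
values at `0 < t < 1` are the Kelvin transforms of `f` at `x` with center `c`. -/
noncomputable def radialProfile (p : ℝ) (f : E → ℝ) (c x : E) (t : ℝ) : ℝ :=
  t ^ (-(p / 2)) * f (lineMap c x t)

@[simp] lemma radialProfile_one : radialProfile p f c x 1 = f x := by
  simp [radialProfile]

lemma radialProfile_lineMap (ht : 0 < t) (hs : 0 ≤ s) :
    radialProfile p f c (lineMap c x t) s = t ^ (p / 2) * radialProfile p f c x (s * t) := by
  have hcancel : t ^ (p / 2) * t ^ (-(p / 2)) = 1 := by
    rw [← Real.rpow_add ht, add_neg_cancel, Real.rpow_zero]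
  rw [radialProfile, radialProfile, lineMap_lineMap_right, Real.mul_rpow hs ht.le]
  linear_combination -(s ^ (-(p / 2)) * f (lineMap c x (s * t))) * hcancel

/-- Minus the derivative at `t = 1` of `radialProfile p f c x`. Where it is nonnegative along a
ray, shrinking the sphere toward `c` increases the Kelvin transform. -/
noncomputable def radialDefect (p : ℝ) (f : E → ℝ) (c x : E) : ℝ :=
  p / 2 * f x - fderiv ℝ f x (x - c)

lemma continuous_radialDefect (hf : ContDiff ℝ 1 f) : Continuous (radialDefect p f c) := by
  have := hf.continuous
  have := hf.continuous_fderiv one_ne_zero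
  unfold radialDefect
  fun_prop

lemma hasDerivAt_radialProfile (hf : Differentiable ℝ f) (ht : 0 < t) :
    HasDerivAt (radialProfile p f c x)
      (-(t ^ (-(p / 2) - 1) * radialDefect p f c (lineMap c x t))) t := by
  have hline : HasDerivAt (fun s => f (lineMap c x s)) (fderiv ℝ f (lineMap c x t) (x - c)) t :=
    (hf _).hasFDerivAt.comp_hasDerivAt t hasDerivAt_lineMap
  have hray : lineMap c x t - c = t • (x - c) := by simp [lineMap_apply]
  have hpow : t ^ (-(p / 2)) = t ^ (-(p / 2) - 1) * t := by
    rw [← Real.rpow_add_one ht.ne', sub_add_cancel]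
  refine ((Real.hasDerivAt_rpow_const (Or.inl ht.ne')).mul hline).congr_deriv ?_
  rw [radialDefect, hray, map_smul, smul_eq_mul, hpow]
  ring

end NormedSpace

variable [InnerProductSpace ℝ E] {c x : E} {p R l t : ℝ} {f : E → ℝ}

lemma kelvinTransform_eq_radialProfile (hR : 0 ≤ R) :
    kelvinTransform p f c R x = radialProfile p f c x ((R / dist x c) ^ 2) := by
  rw [kelvinTransform, radialProfile, inversion_eq_lineMap,
    ← Real.rpow_natCast_mul (by positivity), Nat.cast_ofNat, mul_neg, mul_div_cancel₀ _ two_ne_zero]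

lemma le_kelvinTransform_of_radialDefect_nonneg (hf : Differentiable ℝ f) (hl : 0 < l)
    (hx : l < dist x c)
    (h : ∀ y, l ^ 2 / dist x c ≤ dist y c → dist y c ≤ dist x c → 0 ≤ radialDefect p f c y) :
    f x ≤ kelvinTransform p f c l x := by
  have hxc : 0 < dist x c := hl.trans hx
  have hratio : (l / dist x c) ^ 2 ≤ 1 := pow_le_one₀ (by positivity) ((div_le_one hxc).2 hx.le)
  have hderiv : ∀ t, (l / dist x c) ^ 2 ≤ t → HasDerivAt (radialProfile p f c x)
      (-(t ^ (-(p / 2) - 1) * radialDefect p f c (lineMap c x t))) t := fun t ht =>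
    hasDerivAt_radialProfile hf (lt_of_lt_of_le (by positivity) ht)
  have hanti : AntitoneOn (radialProfile p f c x) (Icc ((l / dist x c) ^ 2) 1) := by
    refine antitoneOn_of_hasDerivWithinAt_nonpos (convex_Icc _ _)
      (fun t ht => (hderiv t ht.1).continuousAt.continuousWithinAt)
      (fun t ht => (hderiv t (interior_subset ht).1).hasDerivWithinAt) fun t ht => ?_
    obtain ⟨ht0, ht1⟩ := interior_subset ht
    have htpos : 0 ≤ t := (sq_nonneg _).trans ht0
    have hdist : dist (lineMap c x t) c = t * dist x c := by
      rw [dist_lineMap_left, Real.norm_of_nonneg htpos, dist_comm c]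
    have := h (lineMap c x t)
      (by rw [hdist]; calc
        l ^ 2 / dist x c = (l / dist x c) ^ 2 * dist x c := by field_simp
        _ ≤ t * dist x c := by gcongr)
      (by rw [hdist]; exact mul_le_of_le_one_left hxc.le ht1)
    exact neg_nonpos.2 (by positivity)
  rw [kelvinTransform_eq_radialProfile hl.le]
  simpa using hanti ⟨le_rfl, hratio⟩ ⟨hratio, le_rfl⟩ hratio

lemma mul_one_sub_inv_sq_le_radialProfile_sub {k : ℝ} (hk : 0 ≤ k) (hR : 0 < R) (hp : 0 ≤ p)
    (hx : dist x c = R) (ht : 1 ≤ t)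
    (h : f (lineMap c x t) + k * sphereBarrier p c R (lineMap c x t) ≤
      kelvinTransform p f c R (lineMap c x t)) :
    k * R ^ p * (1 - (t⁻¹) ^ 2) ≤ radialProfile p f c x t⁻¹ - radialProfile p f c x t := by
  have ht0 : 0 < t := one_pos.trans_le ht
  have hdist : dist (lineMap c x t) c = t * R := by
    rw [dist_lineMap_left, Real.norm_of_nonneg ht0.le, dist_comm c, hx]
  have hratio : R / (t * R) = t⁻¹ := by field_simp
  have hinv : (t⁻¹) ^ 2 * t = t⁻¹ := by field_simp
  have hvalue : f (lineMap c x t) = t ^ (p / 2) * radialProfile p f c x t := by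
    simpa using radialProfile_lineMap (p := p) (f := f) (c := c) (x := x) ht0 zero_le_one
  have hpow : t ^ p = t ^ (p / 2) * t ^ (p / 2) := by rw [← Real.rpow_add ht0, add_halves]
  have hgap : 0 ≤ 1 - (t⁻¹) ^ 2 :=
    sub_nonneg.2 (pow_le_one₀ (by positivity) (inv_le_one_of_one_le₀ ht))
  rw [kelvinTransform_eq_radialProfile hR.le, radialProfile_lineMap ht0 (by positivity), hvalue,
    sphereBarrier, hdist, ← div_pow, hratio, hinv, Real.mul_rpow ht0.le hR.le, hpow] at h
  refine le_of_mul_le_mul_left ?_ (Real.rpow_pos_of_pos ht0 (p / 2))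
  calc t ^ (p / 2) * (k * R ^ p * (1 - (t⁻¹) ^ 2))
      ≤ t ^ (p / 2) * (t ^ (p / 2) * (k * R ^ p * (1 - (t⁻¹) ^ 2))) :=
        mul_le_mul_of_nonneg_left (le_mul_of_one_le_left (by positivity)
          (Real.one_le_rpow ht (by positivity))) (by positivity)
    _ ≤ t ^ (p / 2) * (radialProfile p f c x t⁻¹ - radialProfile p f c x t) := by linarith

lemma StronglyKelvinDominated.radialDefect_pos (h : StronglyKelvinDominated p f c R)
    (hf : Differentiable ℝ f) (hR : 0 < R) (hp : 0 ≤ p) (hx : dist x c = R) :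
    0 < radialDefect p f c x := by
  obtain ⟨k, hk, hle⟩ := h
  have hderiv : HasDerivAt (radialProfile p f c x) (-radialDefect p f c x) 1 := by
    simpa using hasDerivAt_radialProfile (p := p) (c := c) (x := x) hf one_pos
  have hle_neg : -radialDefect p f c x ≤ -(k * R ^ p) := by
    refine le_neg_of_hasDerivAt_of_forall_le_sub hderiv fun t ht =>
      mul_one_sub_inv_sq_le_radialProfile_sub hk.le hR hp hx ht.le (hle _ ?_)
    rw [dist_lineMap_left, Real.norm_of_nonneg (by positivity), dist_comm c, hx]
    exact lt_mul_of_one_lt_left hR ht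
  exact lt_of_lt_of_le (by positivity) (neg_le_neg_iff.1 hle_neg)

end RadialDefect

section Continuation

lemma exists_forall_abs_dist_sub_lt_pos {E : Type*} [NormedAddCommGroup E] [NormedSpace ℝ E]
    [ProperSpace E] {c : E} {R : ℝ} {g : E → ℝ} (hg : Continuous g) (hR : 0 < R)
    (h : ∀ x, dist x c = R → 0 < g x) : ∃ δ > 0, ∀ y, |dist y c - R| < δ → 0 < g y := by
  obtain ⟨δ, hδ, hsub⟩ := (isCompact_sphere c R).exists_thickening_subset_open
    (isOpen_lt continuous_const hg) h
  refine ⟨min δ R, lt_min hδ hR, fun y hy => hsub (mem_thickening_iff.2 ?_)⟩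
  have hyc : 0 < dist y c := by linarith [(abs_lt.1 (hy.trans_le (min_le_right _ _))).1]
  refine ⟨lineMap c y (R / dist y c), ?_, ?_⟩
  · rw [Metric.mem_sphere, dist_lineMap_left, Real.norm_of_nonneg (by positivity), dist_comm c]
    field_simp
  · rw [dist_comm, dist_lineMap_right, dist_comm c, ← abs_of_pos hyc, Real.norm_eq_abs, ← abs_mul,
      abs_of_pos hyc, sub_mul, one_mul, div_mul_cancel₀ _ hyc.ne']
    exact hy.trans_le (min_le_left _ _)

variable {E : Type*} [NormedAddCommGroup E] [InnerProductSpace ℝ E] [FiniteDimensional ℝ E]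
  {c : E} {p R : ℝ} {f : E → ℝ}

lemma eventually_forall_kelvinTransform_sub_lt {ε : ℝ} (hf : Continuous f) (hR : 0 < R)
    (hε : 0 < ε) : ∀ᶠ l in 𝓝 R, ∀ x, R ≤ dist x c →
      kelvinTransform p f c R x - ε * dist x c ^ p < kelvinTransform p f c l x := by
  have hcompact : ∀ᶠ l in 𝓝 R, ∀ y ∈ closedBall (0 : E) R⁻¹,
      (R ^ p)⁻¹ * f (R ^ 2 • y + c) - ε < (l ^ p)⁻¹ * f (l ^ 2 • y + c) := by
    refine (isCompact_closedBall _ _).eventually_forall_of_forall_eventually fun y _ => ?_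
    have hR' : R ^ p ≠ 0 := (Real.rpow_pos_of_pos hR p).ne'
    have hlim : ContinuousAt (fun w : ℝ × E => (w.1 ^ p)⁻¹ * f (w.1 ^ 2 • w.2 + c)) (R, y) :=
      ((continuousAt_fst.rpow_const (Or.inl hR.ne')).inv₀ hR').mul (by fun_prop)
    have hconst : ContinuousAt (fun w : ℝ × E => (R ^ p)⁻¹ * f (R ^ 2 • w.2 + c) - ε) (R, y) := by
      fun_prop
    exact hconst.eventually_lt hlim (sub_lt_self _ hε)
  filter_upwards [hcompact, eventually_gt_nhds hR] with l hl hl0 x hx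
  have hxc : 0 < dist x c := hR.trans_le hx
  have hpoint : ((dist x c ^ 2)⁻¹ • (x - c)) ∈ closedBall (0 : E) R⁻¹ := by
    rw [mem_closedBall_zero_iff, norm_smul, ← dist_eq_norm, Real.norm_of_nonneg (by positivity),
      sq, mul_inv, inv_mul_cancel_right₀ hxc.ne']
    gcongr
  have hrescale : ∀ m, 0 < m → kelvinTransform p f c m x =
      dist x c ^ p * ((m ^ p)⁻¹ * f (m ^ 2 • (dist x c ^ 2)⁻¹ • (x - c) + c)) := by
    intro m hm
    rw [kelvinTransform_eq_rpow_mul hm.le, Real.div_rpow hxc.le hm.le, inversion, smul_smul,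
      div_pow, div_eq_mul_inv, div_eq_mul_inv, mul_assoc, vsub_eq_sub, vadd_eq_add]
  rw [hrescale R hR, hrescale l hl0, mul_comm ε, ← mul_sub]
  have := hl _ hpoint
  gcongr

lemma StronglyKelvinDominated.eventually_kelvinDominated (h : StronglyKelvinDominated p f c R)
    (hf : ContDiff ℝ 1 f) (hR : 0 < R) (hp : 0 ≤ p) :
    ∀ᶠ l in 𝓝[>] R, KelvinDominated p f c l := by
  have hdiff : Differentiable ℝ f := hf.differentiable one_ne_zero
  obtain ⟨δ, hδ, hdefect⟩ := exists_forall_abs_dist_sub_lt_pos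
    (continuous_radialDefect (p := p) (c := c) hf) hR fun x hx => h.radialDefect_pos hdiff hR hp hx
  obtain ⟨k, hk, hle⟩ := h
  have hgap : 0 < 1 - R ^ 2 / (R + δ) ^ 2 := by
    rw [sub_pos, div_lt_one (by positivity)]; gcongr; linarith
  filter_upwards [self_mem_nhdsWithin, nhdsWithin_le_nhds
    (eventually_forall_kelvinTransform_sub_lt (c := c) (p := p) hf.continuous hR
      (mul_pos hk hgap))] with l (hRl : R < l) hfar x hx
  have hRx : R < dist x c := hRl.trans hx
  rcases lt_or_ge (dist x c) (R + δ) with hnear | hxfar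
  · refine le_kelvinTransform_of_radialDefect_nonneg hdiff (hR.trans hRl) hx fun y hyl hyx =>
      (hdefect y (abs_lt.2 ⟨?_, by linarith⟩)).le
    have : R - δ < l ^ 2 / dist x c := by
      rw [lt_div_iff₀ (hR.trans hRx)]
      nlinarith
    linarith
  · have hbarrier : dist x c ^ p * (1 - R ^ 2 / (R + δ) ^ 2) ≤ sphereBarrier p c R x := by
      unfold sphereBarrier
      gcongr
    calc f x ≤ kelvinTransform p f c R x - k * sphereBarrier p c R x := by linarith [hle x hRx]
      _ ≤ kelvinTransform p f c R x - k * (dist x c ^ p * (1 - R ^ 2 / (R + δ) ^ 2)) := by gcongr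
      _ = kelvinTransform p f c R x - k * (1 - R ^ 2 / (R + δ) ^ 2) * dist x c ^ p := by ring
      _ ≤ kelvinTransform p f c l x := (hfar x hRx.le).le

end Continuation

section StoppingRadius

variable {P : ℝ → Prop} {R : ℝ}

/-- The radii below which `P` holds at every positive radius. The stopping radius of the moving
sphere procedure is the least upper bound of this set. -/
def initialRadii (P : ℝ → Prop) : Set ℝ :=
  {b | 0 < b ∧ ∀ l, 0 < l → l < b → P l}

lemma pos_of_isLUB_initialRadii (h : IsLUB (initialRadii P) R) : 0 < R :=
  have ⟨_, hb⟩ := h.nonempty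
  hb.1.trans_le (h.1 hb)

lemma eventually_nhdsLT_of_isLUB_initialRadii (h : IsLUB (initialRadii P) R) :
    ∀ᶠ l in 𝓝[<] R, P l := by
  filter_upwards [Ioo_mem_nhdsLT (pos_of_isLUB_initialRadii h)] with l ⟨hl0, hlR⟩
  obtain ⟨b, hb, hlb, -⟩ := h.exists_between hlR
  exact hb.2 l hl0 hlb

lemma not_eventually_nhdsGT_of_isLUB_initialRadii (h : IsLUB (initialRadii P) R) (hPR : P R) :
    ¬∀ᶠ l in 𝓝[>] R, P l := by
  intro hgt
  obtain ⟨b, hRb, hb⟩ := mem_nhdsGT_iff_exists_Ioo_subset.1 hgt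
  have hR := pos_of_isLUB_initialRadii h
  refine (h.1 ⟨hR.trans hRb, fun l hl0 hlb => ?_⟩).not_gt hRb
  rcases lt_trichotomy l R with hlR | rfl | hRl
  · obtain ⟨b', hb', hlb', -⟩ := h.exists_between hlR
    exact hb'.2 l hl0 hlb'
  · exact hPR
  · exact hb ⟨hRl, hlb⟩

end StoppingRadius

lemma add_div_sub_mul_sub_eq_neg_finrank {n : ℕ} {α : ℝ} (hα : (n : ℝ) < α) :
    (n + α) / (n - α) * (α - n) =
      -(2 * finrank ℝ (EuclideanSpace ℝ (Fin n)) + (α - n)) := by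
  have : (n : ℝ) - α ≠ 0 := (sub_neg.2 hα).ne
  rw [finrank_euclideanSpace_fin]
  field_simp
  ring

section MovingSpheres

variable {E : Type*} [NormedAddCommGroup E] [InnerProductSpace ℝ E] [FiniteDimensional ℝ E]
  [Nontrivial E] [MeasurableSpace E] [BorelSpace E]

theorem moving_sphere_stop_general {μ : Measure E} [μ.IsAddHaarMeasure] {p q r s R : ℝ}
    {u v : E → ℝ} {c : E} (hp : 0 < p) (hq : 0 < q) (hr : r * q = -(2 * finrank ℝ E + p))
    (hs : s * p = -(2 * finrank ℝ E + q)) (hu : ContDiff ℝ 1 u) (hv : ContDiff ℝ 1 v)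
    (hupos : ∀ y, 0 < u y) (hvpos : ∀ y, 0 < v y) (hueq : IsPowerPotential μ p r u v)
    (hveq : IsPowerPotential μ q s v u)
    (hlub : IsLUB (initialRadii fun l => KelvinDominated p u c l ∧ KelvinDominated q v c l) R) :
    ∀ x, x ≠ c → kelvinTransform p u c R x = u x ∧ kelvinTransform q v c R x = v x := by
  have hR : 0 < R := pos_of_isLUB_initialRadii hlub
  have hbelow := eventually_nhdsLT_of_isLUB_initialRadii hlub
  have hudom := KelvinDominated.of_eventually hu.continuous hR (hbelow.mono fun _ h => h.1)
  have hvdom := KelvinDominated.of_eventually hv.continuous hR (hbelow.mono fun _ h => h.2)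
  have hvstrong : ∀ x, R < dist x c → u x < kelvinTransform p u c R x →
      StronglyKelvinDominated q v c R := fun x hx hlt =>
    hveq.stronglyKelvinDominated hR hq hp hs hvpos hu.continuous hupos hudom hx hlt
  have hustrong : ∀ x, R < dist x c → v x < kelvinTransform q v c R x →
      StronglyKelvinDominated p u c R := fun x hx hlt =>
    hueq.stronglyKelvinDominated hR hp hq hr hupos hv.continuous hvpos hvdom hx hlt
  have hnot_both : ¬(StronglyKelvinDominated p u c R ∧ StronglyKelvinDominated q v c R) := by
    rintro ⟨hU, hV⟩
    exact not_eventually_nhdsGT_of_isLUB_initialRadii hlub ⟨hudom, hvdom⟩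
      ((hU.eventually_kelvinDominated hu hR hp.le).and
        (hV.eventually_kelvinDominated hv hR hq.le))
  have hueq_ext : ∀ x, R < dist x c → kelvinTransform p u c R x = u x := fun x hx =>
    ((hudom x hx).eq_of_not_lt fun hlt =>
      have hV := hvstrong x hx hlt
      hnot_both ⟨hustrong x hx (hV.lt hR hx), hV⟩).symm
  have hveq_ext : ∀ x, R < dist x c → kelvinTransform q v c R x = v x := fun x hx =>
    ((hvdom x hx).eq_of_not_lt fun hlt =>
      have hU := hustrong x hx hlt
      hnot_both ⟨hU, hvstrong x hx (hU.lt hR hx)⟩).symm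
  exact fun x hx => ⟨kelvinTransform_eq_self_of_exterior hR hueq_ext hx,
    kelvinTransform_eq_self_of_exterior hR hveq_ext hx⟩

end MovingSpheres

/-- **If the moving sphere procedure stops, the solutions are conformally invariant**
(Lemma 3.8): for `1 ≤ n < α` and `θ = κ = (n+α)/(n-α)`, with `(u, v)` positive finite
smooth solutions of the integral system, if
`λ̄(x₀) = sup { μ > 0 : u_{x₀,λ} ≥ u and v_{x₀,λ} ≥ v on Σ_{x₀,λ} for all λ ∈ (0, μ) }`
is finite (here formalized as: `lamBar` is the least upper bound of that set),
then `u_{x₀,λ̄} = u` and `v_{x₀,λ̄} = v` away from `x₀`. -/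
theorem moving_sphere_stop (n : ℕ) (hn : 1 ≤ n) (α : ℝ)
    (hα : (n : ℝ) < α)
    (u v : EuclideanSpace ℝ (Fin n) → ℝ)
    (husmooth : ContDiff ℝ (⊤ : ℕ∞) u) (hvsmooth : ContDiff ℝ (⊤ : ℕ∞) v)
    (hupos : ∀ y, 0 < u y) (hvpos : ∀ x, 0 < v x)
    (hueq : ∀ y, ENNReal.ofReal (u y) =
      ∫⁻ x, ENNReal.ofReal (dist x y ^ (α - n) * v x ^ (((n : ℝ) + α) / ((n : ℝ) - α))))
    (hveq : ∀ x, ENNReal.ofReal (v x) =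
      ∫⁻ y, ENNReal.ofReal (dist x y ^ (α - n) * u y ^ (((n : ℝ) + α) / ((n : ℝ) - α))))
    (x₀ : EuclideanSpace ℝ (Fin n)) (lamBar : ℝ)
    (hlub : IsLUB {μ : ℝ | 0 < μ ∧ ∀ lam : ℝ, 0 < lam → lam < μ →
      ∀ ξ : EuclideanSpace ℝ (Fin n), lam < dist ξ x₀ →
        u ξ ≤ kelvin n α u x₀ lam ξ ∧ v ξ ≤ kelvin n α v x₀ lam ξ} lamBar) :
    ∀ ξ : EuclideanSpace ℝ (Fin n), ξ ≠ x₀ →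
      kelvin n α u x₀ lamBar ξ = u ξ ∧ kelvin n α v x₀ lamBar ξ = v ξ := by
  have : Nonempty (Fin n) := Fin.pos_iff_nonempty.1 hn
  have hp : 0 < α - n := sub_pos.2 hα
  have hr := add_div_sub_mul_sub_eq_neg_finrank hα
  have hveq' : IsPowerPotential volume (α - n) ((n + α) / (n - α)) v u := fun x => by
    simpa only [dist_comm x] using hveq x
  simp only [kelvin_eq_kelvinTransform] at hlub ⊢
  exact moving_sphere_stop_general hp hp hr hr (husmooth.of_le (mod_cast le_top))
    (hvsmooth.of_le (mod_cast le_top)) hupos hvpos hueq hveq'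
    (by simpa only [initialRadii, KelvinDominated, ← forall₂_and] using hlub)
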